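/- For all real x, y and all positive integers n, m, the 5-term recurrence (n+1)(y+1)·L_{n+1,m}(x,y) - (m+1)(x+1)·L_{n,m+1}(x,y) = (n+1)·L_{n+1,m-1}(x,y) - (m+1)·L_{n-1,m+1}(x,y) + ((m+1)(y-1-x) - (n+1)(x-1-y))·L_{n,m}(x,y) holds. -/

import Mathlib

/-!
The product of the two binomials in `L2` collapses to a trinomial, so the coefficient of `x^s y^i`
in `L2 n m x y` is
`(-1)^(i+s) (m+n)! / (i! s! (m-i)! (n-s)! (i+s)!)`.
With the convention `1/k! = 0` for negative integers `k`, this formula makes sense for all integers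
`i`, `s`, vanishes outside the summation range, and `1/(k-1)! = k · (1/k!)` always holds
(`invFact_sub_one`). Hence every `L2` in the recurrence can be summed over one common rectangle,
multiplication by `x` or `y` becomes an index shift without boundary terms (`L2_mul_x`, `L2_mul_y`),
and comparing coefficients makes every term a polynomial multiple of
`1 / (i! s! (m+1-i)! (n+1-s)! (i+s)!)`; what remains is a polynomial identity.
-/

noncomputable def L2 (n m : ℕ) (x y : ℝ) : ℝ :=
  ∑ i ∈ Finset.range (m+1), ∑ s ∈ Finset.range (n+1),
    ((-1:ℝ)^(i+s) / ((Nat.factorial i) * (Nat.factorial s))) *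
      ((m+n).choose (m-i)) * ((n+i).choose (n-s)) * x^s * y^i

noncomputable def L2Z (n m : ℤ) (x y : ℝ) : ℝ :=
  if n < 0 ∨ m < 0 then 0 else L2 n.toNat m.toNat x y

/-- The reciprocal factorial `1/k!` on the integers, equal to `0` for negative `k`
(as `1/Γ(k+1)` is). -/
noncomputable def invFact (k : ℤ) : ℝ :=
  if k < 0 then 0 else 1 / (Nat.factorial k.toNat : ℝ)

lemma invFact_neg {k : ℤ} (h : k < 0) : invFact k = 0 := by simp [invFact, h]

lemma invFact_natCast (k : ℕ) : invFact k = 1 / (Nat.factorial k : ℝ) := by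
  simp [invFact]

lemma invFact_sub_one (k : ℤ) : invFact (k - 1) = k * invFact k := by
  rcases lt_trichotomy k 0 with h | rfl | h
  · rw [invFact_neg h, invFact_neg (by omega), mul_zero]
  · simp [invFact_neg]
  · obtain ⟨j, rfl⟩ : ∃ j : ℕ, k = j + 1 := ⟨(k - 1).toNat, by omega⟩
    have h1 : ((j : ℤ) + 1) = ((j + 1 : ℕ) : ℤ) := by push_cast; rfl
    rw [add_sub_cancel_right, h1, invFact_natCast, invFact_natCast, Nat.factorial_succ]
    have := Nat.factorial_ne_zero j
    push_cast
    field_simp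

/-- The coefficient of `x^s y^i` in `L2 n m x y`, extended to all integers `i`, `s`. -/
noncomputable def lCoeff (n m : ℕ) (i s : ℤ) : ℝ :=
  (-1 : ℝ) ^ (i + s) * (Nat.factorial (m + n) : ℝ) *
    (invFact i * invFact s * invFact (m - i) * invFact (n - s) * invFact (i + s))

lemma lCoeff_eq_choose {n m i s : ℕ} (hi : i ≤ m) (hs : s ≤ n) :
    lCoeff n m i s = ((-1:ℝ)^(i+s) / ((Nat.factorial i) * (Nat.factorial s))) *
      ((m+n).choose (m-i)) * ((n+i).choose (n-s)) := by
  have e1 : ((m : ℤ) - i) = ((m - i : ℕ) : ℤ) := by omega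
  have e2 : ((n : ℤ) - s) = ((n - s : ℕ) : ℤ) := by omega
  have e3 : ((i : ℤ) + s) = ((i + s : ℕ) : ℤ) := by omega
  rw [lCoeff, e1, e2, e3, Nat.cast_choose ℝ (by omega : m - i ≤ m + n),
    Nat.cast_choose ℝ (by omega : n - s ≤ n + i), zpow_natCast]
  simp only [invFact_natCast]
  rw [show m + n - (m - i) = n + i by omega, show n + i - (n - s) = i + s by omega]
  have := Nat.factorial_ne_zero (n + i)
  field_simp

/-- The summation range of `L2` may be enlarged to any rectangle containing it. -/
lemma L2_eq_sum {n m M N : ℕ} (hM : m < M) (hN : n < N) (x y : ℝ) :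
    L2 n m x y = ∑ i ∈ Finset.range M, ∑ s ∈ Finset.range N,
      lCoeff n m i s * x ^ s * y ^ i := by
  have h1 : ∀ i : ℕ, ∑ s ∈ Finset.range (n + 1), lCoeff n m i s * x ^ s * y ^ i
      = ∑ s ∈ Finset.range N, lCoeff n m i s * x ^ s * y ^ i := by
    intro i
    apply Finset.sum_subset (Finset.range_mono hN)
    intro s _ hs
    rw [Finset.mem_range] at hs
    simp [lCoeff, invFact_neg (show (n : ℤ) - s < 0 by omega)]
  rw [← Finset.sum_subset (Finset.range_mono (show m + 1 ≤ M from hM))]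
  · rw [L2]
    refine Finset.sum_congr rfl fun i hi => ?_
    rw [← h1]
    refine Finset.sum_congr rfl fun s hs => ?_
    rw [Finset.mem_range] at hi hs
    rw [lCoeff_eq_choose (by omega) (by omega)]
  · intro i _ hi
    rw [Finset.mem_range] at hi
    simp [lCoeff, invFact_neg (show (m : ℤ) - i < 0 by omega)]

lemma L2_mul_y {n m M N : ℕ} (hM : m < M) (hN : n < N) (x y : ℝ) :
    y * L2 n m x y = ∑ i ∈ Finset.range (M + 1), ∑ s ∈ Finset.range N,
      lCoeff n m (i - 1) s * x ^ s * y ^ i := by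
  rw [Finset.sum_range_succ', L2_eq_sum hM hN]
  have h0 : ∑ s ∈ Finset.range N, lCoeff n m (((0 : ℕ) : ℤ) - 1) s * x ^ s * y ^ 0 = 0 :=
    Finset.sum_eq_zero fun s _ => by
      simp [lCoeff, invFact_neg]
  rw [h0, add_zero, Finset.mul_sum]
  refine Finset.sum_congr rfl fun i _ => ?_
  rw [Finset.mul_sum]
  refine Finset.sum_congr rfl fun s _ => ?_
  rw [Nat.cast_succ, add_sub_cancel_right]
  ring

lemma L2_mul_x {n m M N : ℕ} (hM : m < M) (hN : n < N) (x y : ℝ) :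
    x * L2 n m x y = ∑ i ∈ Finset.range M, ∑ s ∈ Finset.range (N + 1),
      lCoeff n m i (s - 1) * x ^ s * y ^ i := by
  rw [L2_eq_sum hM hN, Finset.mul_sum]
  refine Finset.sum_congr rfl fun i _ => ?_
  rw [Finset.sum_range_succ', Finset.mul_sum]
  have h0 : lCoeff n m i (((0 : ℕ) : ℤ) - 1) * x ^ 0 * y ^ i = 0 := by
    simp [lCoeff, invFact_neg]
  rw [h0, add_zero]
  refine Finset.sum_congr rfl fun s _ => ?_
  rw [Nat.cast_succ, add_sub_cancel_right]
  ring

/-- The recurrence for the coefficients, with `n = a + 1` and `m = b + 1`. -/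
lemma lCoeff_recurrence (a b : ℕ) (i s : ℤ) :
    ((a:ℝ)+2) * (lCoeff (a+2) (b+1) (i-1) s + lCoeff (a+2) (b+1) i s)
      - ((b:ℝ)+2) * (lCoeff (a+1) (b+2) i (s-1) + lCoeff (a+1) (b+2) i s)
    = ((a:ℝ)+2) * lCoeff (a+2) b i s - ((b:ℝ)+2) * lCoeff a (b+2) i s
      + ((a:ℝ)+b+4) * (lCoeff (a+1) (b+1) (i-1) s - lCoeff (a+1) (b+1) i (s-1))
      + ((a:ℝ)-b) * lCoeff (a+1) (b+1) i s := by
  have hz1 : (-1:ℝ)^(i - 1 + s) = -(-1:ℝ)^(i+s) := by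
    rw [show i - 1 + s = i + s - 1 by ring, zpow_sub_one₀ (by norm_num)]; norm_num
  have hz2 : (-1:ℝ)^(i + (s - 1)) = -(-1:ℝ)^(i+s) := by
    rw [show i + (s - 1) = i + s - 1 by ring, zpow_sub_one₀ (by norm_num)]; norm_num
  have hi := invFact_sub_one i
  have hs := invFact_sub_one s
  have his := invFact_sub_one (i + s)
  have hm1 := invFact_sub_one ((b:ℤ) + 2 - i)
  have hm2 := invFact_sub_one ((b:ℤ) + 2 - i - 1)
  have hn1 := invFact_sub_one ((a:ℤ) + 2 - s)
  have hn2 := invFact_sub_one ((a:ℤ) + 2 - s - 1)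
  rw [hm1] at hm2
  rw [hn1] at hn2
  simp only [lCoeff, hz1, hz2]
  push_cast
  rw [show i - 1 + s = i + s - 1 by ring, show i + (s - 1) = i + s - 1 by ring,
    show (b:ℤ) + 1 - (i - 1) = b + 2 - i by ring, show (b:ℤ) + 1 - i = b + 2 - i - 1 by ring,
    show (b:ℤ) - i = b + 2 - i - 1 - 1 by ring,
    show (a:ℤ) + 1 - (s - 1) = a + 2 - s by ring, show (a:ℤ) + 1 - s = a + 2 - s - 1 by ring,
    show (a:ℤ) - s = a + 2 - s - 1 - 1 by ring, hm2, hn2, hm1, hn1, hi, hs, his,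
    show b + 1 + (a + 2) = (b + a + 2) + 1 by ring, show b + 2 + (a + 1) = (b + a + 2) + 1 by ring,
    show b + (a + 2) = b + a + 2 by ring, show b + 2 + a = b + a + 2 by ring,
    show b + 1 + (a + 1) = b + a + 2 by ring, Nat.factorial_succ (b + a + 2)]
  push_cast
  ring

theorem stmt7 (x y : ℝ) (n m : ℕ) (hn : 1 ≤ n) (hm : 1 ≤ m) :
    ((n:ℝ)+1)*(y+1) * L2Z (n+1) m x y - ((m:ℝ)+1)*(x+1) * L2Z n (m+1) x y =
      ((n:ℝ)+1) * L2Z (n+1) ((m:ℤ)-1) x y - ((m:ℝ)+1) * L2Z ((n:ℤ)-1) (m+1) x y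
      + (((m:ℝ)+1)*(y-1-x) - ((n:ℝ)+1)*(x-1-y)) * L2Z n m x y := by
  obtain ⟨a, rfl⟩ : ∃ a, n = a + 1 := ⟨n - 1, by omega⟩
  obtain ⟨b, rfl⟩ : ∃ b, m = b + 1 := ⟨m - 1, by omega⟩
  have hZ : ∀ (p q : ℤ) (n m : ℕ), p = n → q = m → L2Z p q x y = L2 n m x y := by
    rintro _ _ n m rfl rfl
    have : ¬ ((n : ℤ) < 0 ∨ (m : ℤ) < 0) := by omega
    simp [L2Z, this]
  rw [hZ _ _ (a+2) (b+1) (by push_cast; ring) (by push_cast; ring),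
    hZ _ _ (a+1) (b+2) (by push_cast; ring) (by push_cast; ring),
    hZ _ _ (a+2) b (by push_cast; ring) (by push_cast; ring),
    hZ _ _ a (b+2) (by push_cast; ring) (by push_cast; ring),
    hZ _ _ (a+1) (b+1) (by push_cast; ring) (by push_cast; ring)]
  have key : ((a:ℝ)+2) * (y * L2 (a+2) (b+1) x y + L2 (a+2) (b+1) x y)
      - ((b:ℝ)+2) * (x * L2 (a+1) (b+2) x y + L2 (a+1) (b+2) x y)
    = ((a:ℝ)+2) * L2 (a+2) b x y - ((b:ℝ)+2) * L2 a (b+2) x y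
      + ((a:ℝ)+b+4) * (y * L2 (a+1) (b+1) x y - x * L2 (a+1) (b+1) x y)
      + ((a:ℝ)-b) * L2 (a+1) (b+1) x y := by
    rw [L2_mul_y (n := a+2) (m := b+1) (M := b+3) (N := a+4) (by omega) (by omega),
      L2_mul_x (n := a+1) (m := b+2) (M := b+4) (N := a+3) (by omega) (by omega),
      L2_mul_y (n := a+1) (m := b+1) (M := b+3) (N := a+4) (by omega) (by omega),
      L2_mul_x (n := a+1) (m := b+1) (M := b+4) (N := a+3) (by omega) (by omega)]
    simp only [L2_eq_sum (n := a+2) (m := b+1) (M := b+4) (N := a+4) (by omega) (by omega),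
      L2_eq_sum (n := a+1) (m := b+2) (M := b+4) (N := a+4) (by omega) (by omega),
      L2_eq_sum (n := a+2) (m := b) (M := b+4) (N := a+4) (by omega) (by omega),
      L2_eq_sum (n := a) (m := b+2) (M := b+4) (N := a+4) (by omega) (by omega),
      L2_eq_sum (n := a+1) (m := b+1) (M := b+4) (N := a+4) (by omega) (by omega),
      Finset.mul_sum, ← Finset.sum_add_distrib, ← Finset.sum_sub_distrib]
    refine Finset.sum_congr rfl fun i _ => Finset.sum_congr rfl fun s _ => ?_
    linear_combination (x ^ s * y ^ i) * lCoeff_recurrence a b i s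
  push_cast
  linear_combination key
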